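/- Let H be a real Hilbert space, let a : H × H → ℝ be a bilinear form that is coercive with constant K > 0, i.e. a(u,u) ≥ K‖u‖² for all u ∈ H, let Φ, Ψ : H → H be maps such that Φ is monotone, i.e. ⟨Φ(u) − Φ(v), u − v⟩ ≥ 0 for all u, v ∈ H, and suppose there is ε ≥ 0 with ‖Ψ(z) − Φ(z)‖ ≤ ε for all z ∈ H. Let f ∈ H, and suppose y ∈ H satisfies a(y, v) + ⟨Φ(y), v⟩ = ⟨f, v⟩ for all v ∈ H, and w ∈ H satisfies a(w, v) + ⟨Ψ(w), v⟩ = ⟨f, v⟩ for all v ∈ H. Then ‖w − y‖ ≤ ε/K. -/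

import Mathlib

open scoped RealInnerProductSpace

section StronglyMonotone

variable {V : Type*} [SeminormedAddCommGroup V] [NormedSpace ℝ V]

/-- Strong monotonicity with constant `K` of a (possibly nonlinear) operator from a space to its
dual; `K = 0` is plain monotonicity. The algebraic dual is used so that forms `u ↦ a(u, ·)` need
not be bounded. -/
def StronglyMonotoneWith (K : ℝ) (A : V → Module.Dual ℝ V) : Prop :=
  ∀ u v : V, K * ‖u - v‖ ^ 2 ≤ (A u - A v) (u - v)

namespace StronglyMonotoneWith

variable {K L : ℝ} {A B : V → Module.Dual ℝ V}

theorem of_coercive {a : V →ₗ[ℝ] V →ₗ[ℝ] ℝ} (ha : ∀ u, K * ‖u‖ ^ 2 ≤ a u u) :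
    StronglyMonotoneWith K a := fun u v ↦ by
  rw [← map_sub]
  exact ha (u - v)

theorem add (hA : StronglyMonotoneWith K A) (hB : StronglyMonotoneWith L B) :
    StronglyMonotoneWith (K + L) (A + B) := fun u v ↦ by
  rw [Pi.add_apply, Pi.add_apply, add_sub_add_comm, LinearMap.add_apply, add_mul]
  exact add_le_add (hA u v) (hB u v)

theorem mul_norm_sub_le (hA : StronglyMonotoneWith K A) {c : ℝ} (hc : 0 ≤ c) {u v : V}
    (h : (A u - A v) (u - v) ≤ c * ‖u - v‖) : K * ‖u - v‖ ≤ c := by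
  rcases (norm_nonneg (u - v)).eq_or_lt with hzero | hpos
  · rwa [← hzero, mul_zero]
  · refine le_of_mul_le_mul_right ?_ hpos
    calc K * ‖u - v‖ * ‖u - v‖ = K * ‖u - v‖ ^ 2 := by ring
      _ ≤ (A u - A v) (u - v) := hA u v
      _ ≤ c * ‖u - v‖ := h

end StronglyMonotoneWith

theorem perturbed_monotone_solution_estimate_general {K ε : ℝ} {A Φ Ψ : V → Module.Dual ℝ V}
    {f : Module.Dual ℝ V} {y w : V} (hK : 0 < K) (hA : StronglyMonotoneWith K A)
    (hΦ : StronglyMonotoneWith 0 Φ) (hε : 0 ≤ ε) (hclose : ∀ v, |Ψ w v - Φ w v| ≤ ε * ‖v‖)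
    (hy : A y + Φ y = f) (hw : A w + Ψ w = f) : ‖w - y‖ ≤ ε / K := by
  have hsum : StronglyMonotoneWith K (A + Φ) := by simpa only [add_zero] using hA.add hΦ
  have hresidual : (A + Φ) w - (A + Φ) y = Φ w - Ψ w := by
    rw [Pi.add_apply, Pi.add_apply, hy, ← hw, add_sub_add_left_eq_sub]
  rw [le_div_iff₀' hK]
  refine hsum.mul_norm_sub_le hε ?_
  rw [hresidual, LinearMap.sub_apply]
  exact (le_abs_self _).trans ((abs_sub_comm _ _).trans_le (hclose (w - y)))

end StronglyMonotone

section Inner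

variable {H : Type*} [SeminormedAddCommGroup H] [InnerProductSpace ℝ H]

theorem StronglyMonotoneWith.of_inner {K : ℝ} {Φ : H → H}
    (hΦ : ∀ u v, K * ‖u - v‖ ^ 2 ≤ ⟪Φ u - Φ v, u - v⟫) :
    StronglyMonotoneWith K fun u ↦ innerₗ H (Φ u) := fun u v ↦ by
  rw [← map_sub, innerₗ_apply_apply]
  exact hΦ u v

theorem abs_real_inner_sub_inner_le {x x' : H} {ε : ℝ} (h : ‖x - x'‖ ≤ ε) (v : H) :
    |⟪x, v⟫ - ⟪x', v⟫| ≤ ε * ‖v‖ := by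
  rw [← inner_sub_left]
  exact (abs_real_inner_le_norm _ _).trans (mul_le_mul_of_nonneg_right h (norm_nonneg v))

end Inner

/-- Abstract Hilbert-space estimate behind the `H¹`-convergence of the states:
if `a` is a coercive bilinear form, `Φ` is monotone, and `Ψ` is uniformly
`ε`-close to `Φ`, then the solutions of the two semilinear equations with the
same right-hand side `f` satisfy `‖w − y‖ ≤ ε/K`. -/
theorem perturbed_monotone_solution_estimate
    {H : Type*} [NormedAddCommGroup H] [InnerProductSpace ℝ H]
    (a : H →ₗ[ℝ] H →ₗ[ℝ] ℝ) (K : ℝ) (hK : 0 < K)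
    (hcoer : ∀ u : H, K * ‖u‖ ^ 2 ≤ a u u)
    (Φ Ψ : H → H)
    (hmono : ∀ u v : H, 0 ≤ ⟪Φ u - Φ v, u - v⟫)
    (ε : ℝ) (hε : 0 ≤ ε) (hclose : ∀ z : H, ‖Ψ z - Φ z‖ ≤ ε)
    (f y w : H)
    (hy : ∀ v : H, a y v + ⟪Φ y, v⟫ = ⟪f, v⟫)
    (hw : ∀ v : H, a w v + ⟪Ψ w, v⟫ = ⟪f, v⟫) :
    ‖w - y‖ ≤ ε / K := by
  have hΦ : StronglyMonotoneWith 0 fun u ↦ innerₗ H (Φ u) :=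
    .of_inner (by simpa only [zero_mul] using hmono)
  exact perturbed_monotone_solution_estimate_general (Ψ := fun u ↦ innerₗ H (Ψ u))
    (f := innerₗ H f) hK (.of_coercive hcoer) hΦ hε (abs_real_inner_sub_inner_le (hclose w))
    (LinearMap.ext hy) (LinearMap.ext hw)
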